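/- Let w(y) = (1 + √(1−y))^(−1/2), y(x) = 8x(2x+1)/(4x+1)², v(x) = x(2x+1)(4x+1), A(x, z) = w(y(x)·e^z)/w(y(x)), and define the cumulant generating function K(x, z) = log A(x, z) for x > 0 and real z with y(x)·e^z < 1. Then K satisfies the partial differential equation v(x)·∂K/∂x − ∂K/∂z + x = 0 at every such (x, z), and K(x, 0) = 0. -/

import Mathlib

open Real

noncomputable def w (y : ℝ) : ℝ := (1 + Real.sqrt (1 - y)) ^ (-(1 / 2 : ℝ))

noncomputable def yFun (x : ℝ) : ℝ := 8 * x * (2 * x + 1) / (4 * x + 1) ^ 2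

noncomputable def v (x : ℝ) : ℝ := x * (2 * x + 1) * (4 * x + 1)

noncomputable def A (x z : ℝ) : ℝ := w (yFun x * Real.exp z) / w (yFun x)

noncomputable def K (x z : ℝ) : ℝ := Real.log (A x z)


theorem w_pos (y : ℝ) : 0 < w y := by
  unfold w
  have := Real.sqrt_nonneg (1 - y)
  positivity

theorem logw_deriv (y : ℝ) (hy : y < 1) :
    HasDerivAt (fun t => Real.log (w t))
      (1 / (4 * Real.sqrt (1 - y) * (1 + Real.sqrt (1 - y)))) y := by
  have e : (fun t => Real.log (w t)) = fun t => -(1 / 2 : ℝ) * Real.log (1 + Real.sqrt (1 - t)) := by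
    funext t
    have := Real.sqrt_nonneg (1 - t)
    unfold w
    rw [Real.log_rpow (by positivity)]
  rw [e]
  have hs : 0 < Real.sqrt (1 - y) := Real.sqrt_pos.mpr (by linarith)
  have h1 : HasDerivAt (fun t : ℝ => 1 - t) (-1) y := by
    simpa using (hasDerivAt_id y).const_sub 1
  have h2 := ((h1.sqrt (by linarith)).const_add 1).log (by positivity)
  refine (h2.const_mul (-(1 / 2 : ℝ))).congr_deriv ?_
  field_simp
  norm_num

theorem K_eq (x z : ℝ) :
    K x z = Real.log (w (yFun x * Real.exp z)) - Real.log (w (yFun x)) := by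
  unfold K A
  rw [Real.log_div (w_pos _).ne' (w_pos _).ne']

theorem one_sub_yFun (x : ℝ) (hx : 0 < x) : 1 - yFun x = (1 / (4 * x + 1)) ^ 2 := by
  unfold yFun
  field_simp
  ring

theorem yFun_deriv (x : ℝ) (hx : 0 < x) : HasDerivAt yFun (8 / (4 * x + 1) ^ 3) x := by
  have ha : HasDerivAt (fun t : ℝ => 8 * t * (2 * t + 1)) (32 * x + 8) x := by
    have := ((hasDerivAt_id x).const_mul 8).mul (((hasDerivAt_id x).const_mul 2).add_const 1)
    refine this.congr_deriv ?_
    simp only [id]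
    ring
  have hb : HasDerivAt (fun t : ℝ => (4 * t + 1) ^ 2) (8 * (4 * x + 1)) x := by
    have := (((hasDerivAt_id x).const_mul 4).add_const 1).pow 2
    refine this.congr_deriv ?_
    simp only [id]
    push_cast
    ring
  refine (ha.div hb (by positivity)).congr_deriv ?_
  field_simp
  ring

theorem cgf_pde (x z : ℝ) (hx : 0 < x) (hz : yFun x * Real.exp z < 1) :
    DifferentiableAt ℝ (fun t => K t z) x ∧
    DifferentiableAt ℝ (fun t => K x t) z ∧
    v x * deriv (fun t => K t z) x - deriv (fun t => K x t) z + x = 0 ∧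
    K x 0 = 0 := by
  have hq := one_sub_yFun x hx
  have hy : yFun x < 1 := by
    have : 0 < (1 / (4 * x + 1)) ^ 2 := by positivity
    linarith
  have hs : Real.sqrt (1 - yFun x) = 1 / (4 * x + 1) := by
    rw [hq, Real.sqrt_sq (by positivity)]
  have d1 := logw_deriv _ hz
  have d2 := logw_deriv _ hy
  rw [hs] at d2
  generalize 1 / (4 * Real.sqrt (1 - yFun x * Real.exp z) *
    (1 + Real.sqrt (1 - yFun x * Real.exp z))) = D at d1
  have hyd := yFun_deriv x hx
  have hX := (HasDerivAt.comp x d1 (hyd.mul_const (Real.exp z))).sub (HasDerivAt.comp x d2 hyd)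
  have hZ := (HasDerivAt.comp z d1 ((Real.hasDerivAt_exp z).const_mul (yFun x))).sub_const
    (Real.log (w (yFun x)))
  have eX : HasDerivAt (fun t => K t z) _ x :=
    hX.congr_of_eventuallyEq (Filter.Eventually.of_forall fun t => K_eq t z)
  have eZ : HasDerivAt (fun t => K x t) _ z :=
    hZ.congr_of_eventuallyEq (Filter.Eventually.of_forall fun t => K_eq x t)
  refine ⟨eX.differentiableAt, eZ.differentiableAt, ?_, ?_⟩
  · rw [eX.deriv, eZ.deriv]
    unfold v yFun
    field_simp
    ring
  · rw [K_eq]; simp
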